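/- Let ν be an s-graphon, let k, K ∈ ℕ, and let f_1,…,f_k be non-negative Borel functions on [0,1] whose sum is the constant function 1 and with ∫ f_i dλ = 1/k for each i; let M(i,j) = ∫ f_i(x) f_j(y) dν(x,y). For r = 1,…,K define g_r = k · Σ_{i=1}^k λ( ((i−1)/k, i/k) ∩ ((r−1)/K, r/K) ) · f_i. Then g_1,…,g_K are non-negative Borel functions whose sum is the constant function 1, with ∫ g_r dλ = 1/K for each r; moreover, the matrix N(r,s) = ∫ g_r(x) g_s(y) dν(x,y) belongs to the K-shape C(ν,K) and satisfies μ_N( ((r−1)/K, r/K) × ((s−1)/K, s/K) ) = μ_M( ((r−1)/K, r/K) × ((s−1)/K, s/K) ) for all r,s = 1,…,K. -/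

import Mathlib

open MeasureTheory Topology Filter

noncomputable section

/-- The unit square `[0,1]²`. -/
abbrev Sq : Type := unitInterval × unitInterval

/-- Convergence of a sequence of subsets in the Vietoris topology
(upper + lower Vietoris convergence). -/
def VietorisTendsto {X : Type*} [TopologicalSpace X] (A : ℕ → Set X) (B : Set X) : Prop :=
  (∀ U : Set X, IsOpen U → B ⊆ U → ∀ᶠ n in atTop, A n ⊆ U) ∧
  (∀ U : Set X, IsOpen U → (B ∩ U).Nonempty → ∀ᶠ n in atTop, (A n ∩ U).Nonempty)

/-- A measure on the unit square is symmetric if it is invariant under the coordinate swap. -/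
def IsSymmSq (μ : Measure Sq) : Prop := μ.map Prod.swap = μ

/-- s-graphons: symmetric Borel probability measures on the unit square,
with the weak topology. -/
def SGraphon : Type := {μ : ProbabilityMeasure Sq // IsSymmSq (μ : Measure Sq)}

instance : TopologicalSpace SGraphon :=
  inferInstanceAs (TopologicalSpace {μ : ProbabilityMeasure Sq // IsSymmSq (μ : Measure Sq)})

/-- The underlying measure of an s-graphon. -/
def SGraphon.toMeasure (μ : SGraphon) : Measure Sq := (μ.1 : Measure Sq)

/-- A non-negative bounded Borel function on the unit square is fairly distributed
if all its horizontal and vertical sections integrate (w.r.t. Lebesgue measure) to 1. -/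
structure FairlyDistributed (f : Sq → ℝ) : Prop where
  measurable : Measurable f
  nonneg : ∀ p, 0 ≤ f p
  bounded : ∃ C : ℝ, ∀ p, f p ≤ C
  row : ∀ x : unitInterval, ∫ v, f (x, v) = 1
  col : ∀ y : unitInterval, ∫ u, f (u, y) = 1

/-- The density `φ(f,μ)`. -/
def phiFn (f : Sq → ℝ) (μ : Measure Sq) (p : Sq) : ℝ :=
  ∫ q, f (q.1, p.1) * f (q.2, p.2) ∂μ

/-- The measure `Φ(f,μ)`, with density `φ(f,μ)` w.r.t. 2-dimensional Lebesgue measure. -/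
def PhiMeas (f : Sq → ℝ) (μ : Measure Sq) : Measure Sq :=
  volume.withDensity fun p => ENNReal.ofReal (phiFn f μ p)

/-- The shape of a measure `μ` on the unit square: the weak closure of the set of
(s-graphons corresponding to) the measures `Φ(f,μ)`, `f` continuous fairly distributed. -/
def shapeM (μ : Measure Sq) : Set SGraphon :=
  closure {ν : SGraphon | ∃ f : Sq → ℝ, FairlyDistributed f ∧ Continuous f ∧
    ν.toMeasure = PhiMeas f μ}

/-- The shape `C(μ)` of an s-graphon. -/
def shape (μ : SGraphon) : Set SGraphon := shapeM μ.toMeasure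

/-- A fractional partition into `k` parts: non-negative Borel functions on `[0,1]`
summing to the constant function 1, each integrating to `1/k`. -/
def IsFracPartition (k : ℕ) (f : Fin k → unitInterval → ℝ) : Prop :=
  (∀ i, Measurable (f i)) ∧ (∀ i x, 0 ≤ f i x) ∧ (∀ x, ∑ i, f i x = 1) ∧
    ∀ i, ∫ x, f i x = 1 / k

/-- The `k`-shape `C(μ,k)`: the closure in `ℝ^{k×k}` of the set of density matrices of
fractional partitions into `k` parts. -/
def kShape (μ : Measure Sq) (k : ℕ) : Set (Matrix (Fin k) (Fin k) ℝ) :=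
  closure {M | ∃ f : Fin k → unitInterval → ℝ, IsFracPartition k f ∧
    ∀ i j, M i j = ∫ p, f i p.1 * f j p.2 ∂μ}

/-- `M_k^*`: symmetric `k×k` matrices with non-negative entries summing to 1. -/
def Mstar (k : ℕ) : Set (Matrix (Fin k) (Fin k) ℝ) :=
  {M | M.IsSymm ∧ (∀ i j, 0 ≤ M i j) ∧ ∑ i, ∑ j, M i j = 1}

/-- The index `i` (0-based) with `u ∈ [i/k, (i+1)/k)` (and `i = k-1` for `u = 1`). -/
def gridIdx (k : ℕ) (hk : 0 < k) (u : unitInterval) : Fin k :=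
  ⟨min ⌊(u : ℝ) * k⌋₊ (k - 1), lt_of_le_of_lt (min_le_right _ _) (Nat.sub_lt hk one_pos)⟩

/-- The measure `μ_M` associated to a `k×k` matrix `M`: its density w.r.t. 2-dimensional
Lebesgue measure equals `k² M(i,j)` on the square `[i/k,(i+1)/k) × [j/k,(j+1)/k)` (0-based). -/
def muM {k : ℕ} (M : Matrix (Fin k) (Fin k) ℝ) : Measure Sq :=
  if hk : 0 < k then
    volume.withDensity fun p =>
      ENNReal.ofReal ((k : ℝ) ^ 2 * M (gridIdx k hk p.1) (gridIdx k hk p.2))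
  else 0

/-- `C̃(μ,k)`: the `k`-shape of `μ`, interpreted as a set of s-graphons. -/
def kShapeTilde (μ : Measure Sq) (k : ℕ) : Set SGraphon :=
  {ν : SGraphon | ∃ M ∈ kShape μ k, ν.toMeasure = muM M}

/-- The interval `I_i = [i/k, (i+1)/k)` (0-based), with `I_{k-1} = [(k-1)/k, 1]`,
as a subset of `[0,1]`. -/
def Ik (k : ℕ) (i : Fin k) : Set unitInterval :=
  if (i : ℕ) + 1 = k then Subtype.val ⁻¹' Set.Icc (((i : ℕ) : ℝ) / k) 1
  else Subtype.val ⁻¹' Set.Ico (((i : ℕ) : ℝ) / k) ((((i : ℕ) : ℝ) + 1) / k)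

/-!
Let `W i r` be the length of the overlap of the `i`-th interval of the `k`-grid with the `r`-th
interval of the `K`-grid. Then `W` couples the uniform distributions on `k` and on `K` points, so
`g r = k ∑ i, W i r * f i` is again a fractional partition, and by bilinearity its density matrix is
`N = k² Wᵀ M W`. The density of `μ_M` is constant on the cells of the `k`-grid, so `μ_M` gives the
`(r, s)` rectangle of the `K`-grid the mass `(k² Wᵀ M W) r s = N r s`. For `k = K` the overlap
matrix is `K⁻¹ • 1`, so the same formula shows that `μ_N` gives it the mass `N r s` too.
-/

section Grid

variable {k K : ℕ}

/-- The `i`-th open interval `(i/k, (i+1)/k)` (0-based) of the `k`-grid, as a subset of `ℝ`. -/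
def gridIoo (k : ℕ) (i : Fin k) : Set ℝ :=
  Set.Ioo (((i : ℕ) : ℝ) / k) ((((i : ℕ) : ℝ) + 1) / k)

/-- The `i`-th open interval of the `k`-grid, as a subset of `[0,1]`; it differs from the fibre of
`gridIdx` over `i` only in endpoints. -/
def gridCell (k : ℕ) (i : Fin k) : Set unitInterval :=
  Subtype.val ⁻¹' gridIoo k i

/-- The matrix of lengths of the overlaps of the intervals of the `k`-grid with those of the
`K`-grid. -/
def gridOverlap (k K : ℕ) : Matrix (Fin k) (Fin K) ℝ :=
  fun i r => volume.real (gridIoo k i ∩ gridIoo K r)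

lemma measurableSet_gridCell (i : Fin k) : MeasurableSet (gridCell k i) :=
  measurable_subtype_coe measurableSet_Ioo

lemma gridIoo_subset_Icc (i : Fin k) : gridIoo k i ⊆ Set.Icc 0 1 := by
  have hk : (0 : ℝ) < k := by exact_mod_cast i.pos
  have hi : ((i : ℕ) : ℝ) + 1 ≤ k := by exact_mod_cast i.isLt
  exact Set.Ioo_subset_Icc_self.trans
    (Set.Icc_subset_Icc (by positivity) ((div_le_one hk).mpr hi))

lemma volume_real_gridIoo (i : Fin k) : volume.real (gridIoo k i) = 1 / k := by
  rw [gridIoo, Real.volume_real_Ioo_of_le (by gcongr; linarith)]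
  ring

lemma volume_preimage_coe_unitInterval {s : Set ℝ} (hs : s ⊆ Set.Icc 0 1) :
    volume (Subtype.val ⁻¹' s : Set unitInterval) = volume s := by
  rw [unitInterval.volume_apply, Subtype.image_preimage_coe, Set.inter_eq_right.mpr hs]

lemma floor_mul_of_mem_gridIoo {i : Fin k} {x : ℝ} (hx : x ∈ gridIoo k i) :
    ⌊x * k⌋₊ = i := by
  have hk : (0 : ℝ) < k := by exact_mod_cast i.pos
  have hlower : ((i : ℕ) : ℝ) < x * k := (div_lt_iff₀ hk).mp hx.1
  exact (Nat.floor_eq_iff (i.val.cast_nonneg.trans hlower.le)).mpr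
    ⟨hlower.le, (lt_div_iff₀ hk).mp hx.2⟩

lemma disjoint_gridIoo {i j : Fin k} (hij : i ≠ j) : Disjoint (gridIoo k i) (gridIoo k j) :=
  Set.disjoint_left.mpr fun _ hi hj =>
    hij <| Fin.ext <| (floor_mul_of_mem_gridIoo hi).symm.trans (floor_mul_of_mem_gridIoo hj)

lemma measurable_gridIdx (hk : 0 < k) : Measurable (gridIdx k hk) := by
  have htrunc : Measurable fun n : ℕ => (⟨min n (k - 1),
      lt_of_le_of_lt (min_le_right _ _) (Nat.sub_lt hk one_pos)⟩ : Fin k) := measurable_from_nat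
  exact htrunc.comp (Nat.measurable_floor.comp (measurable_subtype_coe.mul_const _))

lemma gridIdx_of_mem_gridCell (hk : 0 < k) {i : Fin k} {u : unitInterval}
    (hu : u ∈ gridCell k i) : gridIdx k hk u = i := by
  apply Fin.ext
  simp only [gridIdx, floor_mul_of_mem_gridIoo hu]
  omega

lemma coe_mem_Icc_gridIdx (hk : 0 < k) (u : unitInterval) :
    (u : ℝ) ∈ Set.Icc (((gridIdx k hk u : ℕ) : ℝ) / k)
      ((((gridIdx k hk u : ℕ) : ℝ) + 1) / k) := by
  have hk' : (0 : ℝ) < k := by exact_mod_cast hk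
  rw [Set.mem_Icc, div_le_iff₀ hk', le_div_iff₀ hk']
  simp only [gridIdx]
  constructor
  · calc ((min ⌊(u : ℝ) * k⌋₊ (k - 1) : ℕ) : ℝ) ≤ ⌊(u : ℝ) * k⌋₊ := by
          exact_mod_cast min_le_left _ _
      _ ≤ u * k := Nat.floor_le (mul_nonneg u.2.1 hk'.le)
  · rcases le_total ⌊(u : ℝ) * k⌋₊ (k - 1) with hfloor | hfloor
    · rw [min_eq_left hfloor]
      exact (Nat.lt_floor_add_one _).le
    · have hlast : ((k - 1 : ℕ) : ℝ) + 1 = k := by exact_mod_cast Nat.sub_add_cancel hk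
      rw [min_eq_right hfloor, hlast]
      exact mul_le_of_le_one_left hk'.le u.2.2

lemma gridIdx_preimage_singleton_ae_eq (hk : 0 < k) (i : Fin k) :
    gridIdx k hk ⁻¹' {i} =ᵐ[volume] gridCell k i := by
  have hlower : gridCell k i ⊆ gridIdx k hk ⁻¹' {i} :=
    fun _ hu => gridIdx_of_mem_gridCell hk hu
  have hupper : gridIdx k hk ⁻¹' {i} ⊆
      Subtype.val ⁻¹' Set.Icc (((i : ℕ) : ℝ) / k) ((((i : ℕ) : ℝ) + 1) / k) := by
    rintro u rfl
    exact coe_mem_Icc_gridIdx hk u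
  have hclosure : (Subtype.val ⁻¹' Set.Icc (((i : ℕ) : ℝ) / k) ((((i : ℕ) : ℝ) + 1) / k) :
      Set unitInterval) =ᵐ[volume] gridCell k i :=
    unitInterval.measurePreserving_coe.quasiMeasurePreserving.preimage_ae_eq
      Ioo_ae_eq_Icc.symm
  exact (hupper.eventuallyLE.trans hclosure.le).antisymm hlower.eventuallyLE

lemma volume_gridIdx_preimage_inter_gridCell (hk : 0 < k) (i : Fin k) (r : Fin K) :
    volume (gridIdx k hk ⁻¹' {i} ∩ gridCell K r) = ENNReal.ofReal (gridOverlap k K i r) := by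
  have hsub : gridIoo k i ∩ gridIoo K r ⊆ Set.Icc 0 1 :=
    Set.inter_subset_left.trans (gridIoo_subset_Icc i)
  calc volume (gridIdx k hk ⁻¹' {i} ∩ gridCell K r)
      = volume (gridCell k i ∩ gridCell K r) :=
        measure_congr ((gridIdx_preimage_singleton_ae_eq hk i).inter (ae_eq_refl _))
    _ = volume (gridIoo k i ∩ gridIoo K r) := volume_preimage_coe_unitInterval hsub
    _ = ENNReal.ofReal (gridOverlap k K i r) :=
        (ofReal_measureReal (measure_ne_top_of_subset hsub measure_Icc_lt_top.ne)).symm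

lemma gridOverlap_nonneg (i : Fin k) (r : Fin K) : 0 ≤ gridOverlap k K i r :=
  measureReal_nonneg

lemma gridOverlap_comm (i : Fin k) (r : Fin K) : gridOverlap k K i r = gridOverlap K k r i := by
  rw [gridOverlap, gridOverlap, Set.inter_comm]

lemma gridOverlap_self (k : ℕ) :
    gridOverlap k k = (1 / k : ℝ) • (1 : Matrix (Fin k) (Fin k) ℝ) := by
  ext i j
  rcases eq_or_ne i j with rfl | hij
  · simp [gridOverlap, volume_real_gridIoo]
  · simp [gridOverlap, (disjoint_gridIoo hij).inter_eq, hij]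

lemma sum_gridOverlap (hk : 0 < k) (r : Fin K) : ∑ i, gridOverlap k K i r = 1 / K := by
  have hfibre (i : Fin k) : MeasurableSet (gridIdx k hk ⁻¹' {i}) :=
    measurable_gridIdx hk (measurableSet_singleton i)
  calc ∑ i, gridOverlap k K i r
      = ∑ i, (volume.restrict (gridCell K r)).real (gridIdx k hk ⁻¹' {i}) := by
        refine Finset.sum_congr rfl fun i _ => ?_
        rw [measureReal_restrict_apply (hfibre i), measureReal_def,
          volume_gridIdx_preimage_inter_gridCell, ENNReal.toReal_ofReal (gridOverlap_nonneg i r)]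
    _ = volume.real (gridCell K r) := by
        rw [sum_measureReal_preimage_singleton _ fun i _ => hfibre i, Finset.coe_univ,
          Set.preimage_univ, measureReal_restrict_apply_univ]
    _ = 1 / K := by
        rw [measureReal_def, gridCell, volume_preimage_coe_unitInterval (gridIoo_subset_Icc r),
          ← measureReal_def, volume_real_gridIoo]

end Grid

section StepMeasure

open scoped Matrix

variable {k K : ℕ}

lemma smul_transpose_mul_mul_apply {ι κ R : Type*} [Fintype ι] [CommSemiring R] (c : R)
    (W : Matrix ι κ R) (M : Matrix ι ι R) (r s : κ) :
    (c • (Wᵀ * M * W)) r s = ∑ i, ∑ j, c * (W i r * W j s) * M i j := by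
  simp only [Matrix.smul_apply, Matrix.mul_apply, Matrix.transpose_apply, smul_eq_mul,
    Finset.sum_mul, Finset.mul_sum]
  rw [Finset.sum_comm]
  congr! 2
  ring

lemma muM_prod (hk : 0 < k) (M : Matrix (Fin k) (Fin k) ℝ) {A B : Set unitInterval}
    (hA : MeasurableSet A) (hB : MeasurableSet B) :
    muM M (A ×ˢ B) = ∑ i, ∑ j, ENNReal.ofReal ((k : ℝ) ^ 2 * M i j) *
      (volume (gridIdx k hk ⁻¹' {i} ∩ A) * volume (gridIdx k hk ⁻¹' {j} ∩ B)) := by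
  have hidx := measurable_gridIdx hk
  have hmap : (volume.restrict (A ×ˢ B)).map (Prod.map (gridIdx k hk) (gridIdx k hk)) =
      ((volume.restrict A).map (gridIdx k hk)).prod ((volume.restrict B).map (gridIdx k hk)) := by
    rw [Measure.map_prod_map _ _ hidx hidx, Measure.prod_restrict, Measure.volume_eq_prod]
  calc muM M (A ×ˢ B)
      = ∫⁻ p in A ×ˢ B,
          ENNReal.ofReal ((k : ℝ) ^ 2 * M (gridIdx k hk p.1) (gridIdx k hk p.2)) := by
        rw [muM, dif_pos hk, withDensity_apply _ (hA.prod hB)]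
    _ = ∫⁻ q, ENNReal.ofReal ((k : ℝ) ^ 2 * M q.1 q.2)
          ∂(volume.restrict (A ×ˢ B)).map (Prod.map (gridIdx k hk) (gridIdx k hk)) := by
        rw [lintegral_map Measurable.of_discrete (hidx.prodMap hidx)]
        rfl
    _ = _ := by
        rw [hmap, lintegral_fintype, Fintype.sum_prod_type]
        refine Finset.sum_congr rfl fun i _ => Finset.sum_congr rfl fun j _ => ?_
        rw [← Set.singleton_prod_singleton, Measure.prod_prod,
          Measure.map_apply hidx (measurableSet_singleton i),
          Measure.map_apply hidx (measurableSet_singleton j),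
          Measure.restrict_apply (hidx (measurableSet_singleton i)),
          Measure.restrict_apply (hidx (measurableSet_singleton j))]

lemma muM_gridCell_prod (hk : 0 < k) {M : Matrix (Fin k) (Fin k) ℝ} (hM : ∀ i j, 0 ≤ M i j)
    (r s : Fin K) :
    muM M (gridCell K r ×ˢ gridCell K s) =
      ENNReal.ofReal (((k : ℝ) ^ 2 • ((gridOverlap k K)ᵀ * M * gridOverlap k K)) r s) := by
  have hterm (i j : Fin k) :
      0 ≤ (k : ℝ) ^ 2 * (gridOverlap k K i r * gridOverlap k K j s) * M i j :=
    mul_nonneg (mul_nonneg (sq_nonneg _)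
      (mul_nonneg (gridOverlap_nonneg i r) (gridOverlap_nonneg j s))) (hM i j)
  calc muM M (gridCell K r ×ˢ gridCell K s)
      = ∑ i, ∑ j, ENNReal.ofReal
          ((k : ℝ) ^ 2 * (gridOverlap k K i r * gridOverlap k K j s) * M i j) := by
        rw [muM_prod hk M (measurableSet_gridCell r) (measurableSet_gridCell s)]
        refine Finset.sum_congr rfl fun i _ => Finset.sum_congr rfl fun j _ => ?_
        rw [volume_gridIdx_preimage_inter_gridCell, volume_gridIdx_preimage_inter_gridCell,
          ← ENNReal.ofReal_mul (gridOverlap_nonneg i r),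
          ← ENNReal.ofReal_mul (mul_nonneg (sq_nonneg _) (hM i j)), mul_right_comm]
    _ = ENNReal.ofReal (∑ i, ∑ j,
          (k : ℝ) ^ 2 * (gridOverlap k K i r * gridOverlap k K j s) * M i j) := by
        rw [ENNReal.ofReal_sum_of_nonneg fun i _ => Finset.sum_nonneg fun j _ => hterm i j]
        exact Finset.sum_congr rfl fun i _ =>
          (ENNReal.ofReal_sum_of_nonneg fun j _ => hterm i j).symm
    _ = _ := by rw [smul_transpose_mul_mul_apply]

lemma muM_gridCell_prod_self {M : Matrix (Fin k) (Fin k) ℝ} (hM : ∀ i j, 0 ≤ M i j)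
    (i j : Fin k) : muM M (gridCell k i ×ˢ gridCell k j) = ENNReal.ofReal (M i j) := by
  have hk : (k : ℝ) ≠ 0 := by exact_mod_cast i.pos.ne'
  rw [muM_gridCell_prod i.pos hM, gridOverlap_self]
  congr 1
  simp only [Matrix.transpose_smul, Matrix.transpose_one, Matrix.smul_mul, Matrix.mul_smul,
    one_mul, mul_one, Matrix.smul_apply, smul_eq_mul]
  field_simp

end StepMeasure

section FractionalPartition

open scoped Matrix

variable {k K : ℕ}

/-- A coupling of the uniform distributions on `k` and on `K` points: a non-negative matrix with
row sums `1/k` and column sums `1/K`. -/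
structure IsUniformCoupling (W : Matrix (Fin k) (Fin K) ℝ) : Prop where
  nonneg : ∀ i r, 0 ≤ W i r
  sum_row : ∀ i, ∑ r, W i r = 1 / k
  sum_col : ∀ r, ∑ i, W i r = 1 / K

/-- The `K` functions among which `f₁, …, f_k` are split by the weights `W`: when `W` is a coupling
of the uniform distributions, the share of `f i` that goes to the `r`-th function is `k * W i r`. -/
def redistribute {α : Type*} (W : Matrix (Fin k) (Fin K) ℝ) (f : Fin k → α → ℝ) :
    Fin K → α → ℝ :=
  fun r x => k * ∑ i, W i r * f i x

/-- The density matrix of a family of functions with respect to a measure on the square. -/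
def densityMatrix {ι α : Type*} [MeasurableSpace α] (μ : Measure (α × α)) (f : ι → α → ℝ) :
    Matrix ι ι ℝ :=
  fun i j => ∫ p, f i p.1 * f j p.2 ∂μ

lemma isUniformCoupling_gridOverlap (hk : 0 < k) (hK : 0 < K) :
    IsUniformCoupling (gridOverlap k K) where
  nonneg := gridOverlap_nonneg
  sum_row i := by
    simp_rw [gridOverlap_comm i]
    exact sum_gridOverlap hK i
  sum_col := sum_gridOverlap hk

lemma densityMatrix_redistribute {α : Type*} [MeasurableSpace α] {μ : Measure (α × α)}
    {f : Fin k → α → ℝ} (hf : ∀ i j, Integrable (fun p => f i p.1 * f j p.2) μ)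
    (W : Matrix (Fin k) (Fin K) ℝ) :
    densityMatrix μ (redistribute W f) =
      (k : ℝ) ^ 2 • (Wᵀ * densityMatrix μ f * W) := by
  ext r s
  have hexpand (p : α × α) : redistribute W f r p.1 * redistribute W f s p.2 =
      ∑ i, ∑ j, (k : ℝ) ^ 2 * (W i r * W j s) * (f i p.1 * f j p.2) := by
    simp only [redistribute]
    rw [mul_mul_mul_comm, Finset.sum_mul_sum]
    simp only [Finset.mul_sum]
    congr! 2
    ring
  calc densityMatrix μ (redistribute W f) r s
      = ∑ i, ∑ j, (k : ℝ) ^ 2 * (W i r * W j s) * densityMatrix μ f i j := by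
        simp only [densityMatrix, hexpand]
        rw [integral_finsetSum _ fun i _ => integrable_finsetSum _ fun j _ =>
          (hf i j).const_mul _]
        refine Finset.sum_congr rfl fun i _ => ?_
        rw [integral_finsetSum _ fun j _ => (hf i j).const_mul _]
        simp only [integral_const_mul]
    _ = _ := by rw [smul_transpose_mul_mul_apply]

namespace IsFracPartition

variable {f : Fin k → unitInterval → ℝ}

lemma pos (hf : IsFracPartition k f) : 0 < k := by
  obtain ⟨-, -, hsum, -⟩ := hf
  rcases Nat.eq_zero_or_pos k with rfl | hk
  · simpa using hsum 0
  · exact hk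

lemma le_one (hf : IsFracPartition k f) (i : Fin k) (x : unitInterval) : f i x ≤ 1 := by
  obtain ⟨-, hnonneg, hsum, -⟩ := hf
  rw [← hsum x]
  exact Finset.single_le_sum (f := fun i => f i x) (fun j _ => hnonneg j x) (Finset.mem_univ i)

lemma integrable (hf : IsFracPartition k f) (μ : Measure unitInterval) [IsFiniteMeasure μ]
    (i : Fin k) : Integrable (f i) μ :=
  .of_bound (hf.1 i).aestronglyMeasurable 1 <| .of_forall fun x => by
    rw [Real.norm_of_nonneg (hf.2.1 i x)]
    exact hf.le_one i x

lemma integrable_mul (hf : IsFracPartition k f) (μ : Measure Sq) [IsFiniteMeasure μ]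
    (i j : Fin k) : Integrable (fun p => f i p.1 * f j p.2) μ :=
  .of_bound (((hf.1 i).comp measurable_fst).mul
    ((hf.1 j).comp measurable_snd)).aestronglyMeasurable 1 <| .of_forall fun p => by
    rw [Real.norm_of_nonneg (mul_nonneg (hf.2.1 i _) (hf.2.1 j _))]
    exact mul_le_one₀ (hf.le_one i _) (hf.2.1 j _) (hf.le_one j _)

lemma densityMatrix_nonneg (hf : IsFracPartition k f) (μ : Measure Sq) (i j : Fin k) :
    0 ≤ densityMatrix μ f i j :=
  integral_nonneg fun _ => mul_nonneg (hf.2.1 i _) (hf.2.1 j _)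

lemma densityMatrix_mem_kShape (hf : IsFracPartition k f) (μ : Measure Sq) :
    densityMatrix μ f ∈ kShape μ k :=
  subset_closure ⟨f, hf, fun _ _ => rfl⟩

lemma redistribute (hf : IsFracPartition k f) {W : Matrix (Fin k) (Fin K) ℝ}
    (hW : IsUniformCoupling W) : IsFracPartition K (redistribute W f) := by
  have hk : (k : ℝ) ≠ 0 := by exact_mod_cast hf.pos.ne'
  have hint := hf.integrable volume
  obtain ⟨hmeas, hnonneg, hsum, hintegral⟩ := hf
  refine ⟨fun r => ?_, fun r x => ?_, fun x => ?_, fun r => ?_⟩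
  · exact (Finset.measurable_sum _ fun i _ => (hmeas i).const_mul _).const_mul _
  · exact mul_nonneg k.cast_nonneg
      (Finset.sum_nonneg fun i _ => mul_nonneg (hW.nonneg i r) (hnonneg i x))
  · calc ∑ r, (k : ℝ) * ∑ i, W i r * f i x
        = k * ∑ i, (∑ r, W i r) * f i x := by
          rw [← Finset.mul_sum, Finset.sum_comm]
          simp only [Finset.sum_mul]
      _ = k * (1 / k * ∑ i, f i x) := by simp only [hW.sum_row, Finset.mul_sum]
      _ = 1 := by rw [hsum x]; field_simp
  · calc ∫ x, (k : ℝ) * ∑ i, W i r * f i x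
        = k * ∑ i, W i r * ∫ x, f i x := by
          rw [integral_const_mul, integral_finsetSum _ fun i _ => (hint i).const_mul _]
          simp only [integral_const_mul]
      _ = k * ((∑ i, W i r) * (1 / k)) := by simp only [hintegral, Finset.sum_mul]
      _ = 1 / K := by rw [hW.sum_col r]; field_simp

end IsFracPartition

end FractionalPartition

instance (ν : SGraphon) : IsProbabilityMeasure ν.toMeasure :=
  ν.1.2

theorem stmt14_general (μ : Measure Sq) [IsFiniteMeasure μ] {k K : ℕ} (hK : 0 < K)
    {f : Fin k → unitInterval → ℝ} (hf : IsFracPartition k f) :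
    letI g := redistribute (gridOverlap k K) f
    IsFracPartition K g ∧ densityMatrix μ g ∈ kShape μ K ∧
      ∀ r s : Fin K, muM (densityMatrix μ g) (gridCell K r ×ˢ gridCell K s) =
        muM (densityMatrix μ f) (gridCell K r ×ˢ gridCell K s) := by
  have hg := hf.redistribute (isUniformCoupling_gridOverlap hf.pos hK)
  refine ⟨hg, hg.densityMatrix_mem_kShape μ, fun r s => ?_⟩
  rw [muM_gridCell_prod_self (hg.densityMatrix_nonneg μ),
    densityMatrix_redistribute (hf.integrable_mul μ),
    muM_gridCell_prod hf.pos (hf.densityMatrix_nonneg μ)]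

/-- Given an s-graphon `ν`, a fractional partition `f₁,…,f_k` with density
matrix `M`, and `K ∈ ℕ`, the functions
`g_r = k ∑_i λ( ((i−1)/k, i/k) ∩ ((r−1)/K, r/K) ) f_i` form a fractional partition into `K`
parts, their density matrix `N` belongs to `C(ν,K)`, and
`μ_N = μ_M` on each open grid rectangle `((r−1)/K, r/K) × ((s−1)/K, s/K)`. -/
theorem stmt14 (ν : SGraphon) (k K : ℕ) (hk : 0 < k) (hK : 0 < K)
    (f : Fin k → unitInterval → ℝ) (hf : IsFracPartition k f) :
    letI g : Fin K → unitInterval → ℝ := fun r x =>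
      (k : ℝ) * ∑ i : Fin k,
        ((volume : Measure ℝ)
            (Set.Ioo (((i : ℕ) : ℝ) / k) ((((i : ℕ) : ℝ) + 1) / k) ∩
             Set.Ioo (((r : ℕ) : ℝ) / K) ((((r : ℕ) : ℝ) + 1) / K))).toReal * f i x
    letI M : Matrix (Fin k) (Fin k) ℝ := fun i j => ∫ p, f i p.1 * f j p.2 ∂ν.toMeasure
    letI N : Matrix (Fin K) (Fin K) ℝ := fun r s => ∫ p, g r p.1 * g s p.2 ∂ν.toMeasure
    IsFracPartition K g ∧ N ∈ kShape ν.toMeasure K ∧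
      ∀ r s : Fin K,
        muM N ((Subtype.val ⁻¹' Set.Ioo (((r : ℕ) : ℝ) / K) ((((r : ℕ) : ℝ) + 1) / K)) ×ˢ
               (Subtype.val ⁻¹' Set.Ioo (((s : ℕ) : ℝ) / K) ((((s : ℕ) : ℝ) + 1) / K))) =
        muM M ((Subtype.val ⁻¹' Set.Ioo (((r : ℕ) : ℝ) / K) ((((r : ℕ) : ℝ) + 1) / K)) ×ˢ
               (Subtype.val ⁻¹' Set.Ioo (((s : ℕ) : ℝ) / K) ((((s : ℕ) : ℝ) + 1) / K))) :=
  stmt14_general ν.toMeasure hK hf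

end
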